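/- Let F be a finite field with q elements of odd characteristic and let a ∈ Fˣ with a² ≠ 1. Let C₁ be the conjugacy class of diag(a, a⁻¹) in GL₂(F) and let C₂ = C₃ be the regular unipotent conjugacy class of GL₂(F). Then the number of triples (S₁, S₂, S₃) ∈ C₁ × C₂ × C₃ with S₁S₂S₃ = 1 equals q³ − q; that is, such triples form a single orbit under simultaneous conjugation by GL₂(F). -/

import Mathlib

open Matrix in
lemma isConj_of_mat {F : Type*} [Field F] (A B c : Matrix (Fin 2) (Fin 2) F)
    (hd : c.det ≠ 0) (h : c * A = B * c) : IsConj A B := by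
  have hu : IsUnit c := (Matrix.isUnit_iff_isUnit_det c).2 (isUnit_iff_ne_zero.2 hd)
  obtain ⟨d, rfl⟩ := hu
  exact ⟨d, h⟩

lemma isConj_inv {F : Type*} [Field F] {A B : Matrix (Fin 2) (Fin 2) F} (h : IsConj A B) :
    A.det = B.det ∧ A.trace = B.trace := by
  obtain ⟨c, hc⟩ := h
  have hc' : B = (c : Matrix (Fin 2) (Fin 2) F) * A * ((c⁻¹ : (Matrix (Fin 2) (Fin 2) F)ˣ) : Matrix (Fin 2) (Fin 2) F) := by
    rw [hc.eq, mul_assoc, Units.mul_inv, mul_one]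
  subst hc'
  constructor
  · rw [Matrix.det_units_conj]
  · rw [Matrix.trace_units_conj]

lemma isConj_unip_iff {F : Type*} [Field F] (A : Matrix (Fin 2) (Fin 2) F) :
    IsConj (!![1, 1; 0, 1] : Matrix (Fin 2) (Fin 2) F) A ↔
      ∃ x y z : F, A = !![1 + x, y; z, 1 - x] ∧ x ^ 2 + y * z = 0 ∧ (y ≠ 0 ∨ z ≠ 0) := by
  constructor
  · intro h
    obtain ⟨h1, h2⟩ := isConj_inv h
    rw [Matrix.det_fin_two, Matrix.det_fin_two] at h1
    rw [Matrix.trace_fin_two, Matrix.trace_fin_two] at h2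
    simp at h1 h2
    have h11 : A 1 1 = 1 - (A 0 0 - 1) := by linear_combination -h2
    refine ⟨A 0 0 - 1, A 0 1, A 1 0, ?_, ?_, ?_⟩
    · ext i j
      fin_cases i <;> fin_cases j <;> simp [h11]
    · rw [h11] at h1
      linear_combination h1
    · by_contra! hh
      obtain ⟨hy, hz⟩ := hh
      have hx : A 0 0 = 1 := by
        rw [h11, hy] at h1
        have : (A 0 0 - 1) ^ 2 = 0 := by linear_combination h1
        have := pow_eq_zero_iff (two_ne_zero) |>.1 this
        linear_combination this
      have hA : A = 1 := by
        ext i j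
        fin_cases i <;> fin_cases j <;> simp [h11, hx, hy, hz]
      rw [hA, isConj_one_left] at h
      have := congrFun (congrFun h 0) 1
      simp at this
  · rintro ⟨x, y, z, rfl, h, hyz⟩
    by_cases hy : y = 0
    · have hz : z ≠ 0 := by tauto
      have hx : x = 0 := by simpa [hy] using h
      subst hx hy
      apply isConj_of_mat _ _ !![0, 1; z, 0]
      · simp [Matrix.det_fin_two, hz]
      · ext i j
        fin_cases i <;> fin_cases j <;> simp [Matrix.mul_apply, Fin.sum_univ_two]
    · apply isConj_of_mat _ _ !![y, 0; -x, 1]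
      · simp [Matrix.det_fin_two, hy]
      · ext i j
        fin_cases i <;> fin_cases j <;> simp [Matrix.mul_apply, Fin.sum_univ_two] <;>
          grind

lemma isConj_diag_iff {F : Type*} [Field F] (a b : F) (hab : a ≠ b)
    (A : Matrix (Fin 2) (Fin 2) F) :
    IsConj (Matrix.diagonal ![a, b]) A ↔ A.det = a * b ∧ A.trace = a + b := by
  constructor
  · intro h
    obtain ⟨h1, h2⟩ := isConj_inv h
    rw [← h1, ← h2]
    simp [Matrix.trace_fin_two]
  · rintro ⟨h1, h2⟩
    rw [Matrix.det_fin_two] at h1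
    rw [Matrix.trace_fin_two] at h2
    have hba : b - a ≠ 0 := sub_ne_zero.2 hab.symm
    by_cases hr : A 0 1 = 0
    · have : (A 0 0 - a) * (A 0 0 - b) = 0 := by
        linear_combination (-1 : F) * h1 + A 0 0 * h2 - A 1 0 * hr
      rcases mul_eq_zero.1 this with h | h
      · apply isConj_of_mat _ _ !![a - b, 0; A 1 0, 1]
        · simpa [Matrix.det_fin_two] using sub_ne_zero.2 hab
        · ext i j
          fin_cases i <;> fin_cases j <;>
            simp [Matrix.mul_apply, Fin.sum_univ_two, hr] <;>
            grind
      · apply isConj_of_mat _ _ !![0, b - a; 1, A 1 0]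
        · simpa [Matrix.det_fin_two] using sub_ne_zero.2 hab
        · ext i j
          fin_cases i <;> fin_cases j <;>
            simp [Matrix.mul_apply, Fin.sum_univ_two, hr] <;>
            grind
    · apply isConj_of_mat _ _ !![A 0 1, A 0 1; a - A 0 0, b - A 0 0]
      · have : A 0 1 * (b - a) ≠ 0 := mul_ne_zero hr hba
        rw [Matrix.det_fin_two]
        simp
        intro h
        apply this
        linear_combination h
      · ext i j
        fin_cases i <;> fin_cases j <;>
          simp [Matrix.mul_apply, Fin.sum_univ_two] <;>
          grind

/-- entries of the two unipotent matrices from parameters -/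
def paramEntries {F : Type*} [Field F] (t : F) :
    (F × Fˣ × F) ⊕ (Fˣ × F) → (F × F × F) × (F × F × F)
  | .inl (x, y, s) => ((x, (y : F), -x ^ 2 / y),
      (s - x * s ^ 2 / t, -(y * s ^ 2 / t),
        (t - 2 * x * (s - x * s ^ 2 / t) - x ^ 2 * s ^ 2 / t) / y))
  | .inr (z, u) => ((0, 0, (z : F)), (u, t / z, -(u ^ 2 * z / t)))

lemma paramEntries_inj {F : Type*} [Field F] (t : F) (ht : t ≠ 0) :
    Function.Injective (paramEntries t) := by
  rintro (⟨x, y, s⟩ | ⟨z, u⟩) (⟨x', y', s'⟩ | ⟨z', u'⟩) h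
  · simp only [paramEntries, Prod.mk.injEq] at h
    obtain ⟨⟨rfl, h2, -⟩, h3, h4, -⟩ := h
    obtain rfl := Units.ext h2
    have hy := y.ne_zero
    have h5 : s ^ 2 / t = s' ^ 2 / t := by
      apply mul_left_cancel₀ hy
      linear_combination -h4
    have : s = s' := by
      linear_combination h3 + x * h5
    rw [this]
  · simp only [paramEntries, Prod.mk.injEq] at h
    exact absurd h.1.2.1 y.ne_zero
  · simp only [paramEntries, Prod.mk.injEq] at h
    exact absurd h.1.2.1.symm y'.ne_zero
  · simp only [paramEntries, Prod.mk.injEq] at h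
    obtain ⟨⟨-, -, h2⟩, rfl, -⟩ := h
    obtain rfl := Units.ext h2
    rfl

lemma paramEntries_range {F : Type*} [Field F] (t : F) (ht : t ≠ 0) (x y z u v w : F) :
    (∃ p, paramEntries t p = ((x, y, z), (u, v, w))) ↔
      x ^ 2 + y * z = 0 ∧ u ^ 2 + v * w = 0 ∧ 2 * x * u + y * w + z * v = t := by
  constructor
  · rintro ⟨(⟨x, y, s⟩ | ⟨z, u⟩), h⟩
    · have hy := y.ne_zero
      simp only [paramEntries, Prod.mk.injEq] at h
      obtain ⟨⟨rfl, rfl, rfl⟩, rfl, rfl, rfl⟩ := h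
      refine ⟨?_, ?_, ?_⟩ <;> field_simp <;> ring
    · have hz := z.ne_zero
      simp only [paramEntries, Prod.mk.injEq] at h
      obtain ⟨⟨rfl, rfl, rfl⟩, rfl, rfl, rfl⟩ := h
      refine ⟨?_, ?_, ?_⟩ <;> field_simp <;> ring
  · rintro ⟨h1, h2, h3⟩
    by_cases hy : y = 0
    · subst hy
      have hx : x = 0 := by simpa using h1
      subst hx
      have hz : z ≠ 0 := by
        rintro rfl
        apply ht
        rw [← h3]; ring
      have hzv : z * v = t := by linear_combination h3
      refine ⟨.inr (Units.mk0 z hz, u), ?_⟩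
      have hv : v ≠ 0 := by
        rintro rfl
        apply ht
        rw [← hzv]; ring
      simp only [paramEntries, Units.val_mk0, Prod.mk.injEq, true_and]
      subst hzv
      refine ⟨?_, ?_⟩
      · field_simp
      · field_simp
        linear_combination -h2
    · have hz : z = -x ^ 2 / y := by
        field_simp
        linear_combination h1
      subst hz
      refine ⟨.inl (x, Units.mk0 y hy, u - x * v / y), ?_⟩
      have hw : w = (t - 2 * x * u + x ^ 2 * v / y) / y := by
        rw [← h3]; field_simp; ring
      have hs : (u - x * v / y) ^ 2 = - v * t / y := by
        rw [← h3]; field_simp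
        linear_combination y ^ 2 * h2
      simp only [paramEntries, Units.val_mk0, Prod.mk.injEq, true_and]
      rw [hs, hw]
      refine ⟨?_, ?_, ?_⟩ <;> field_simp <;> ring


/-- Genus 0, three punctures, `GL₂`, with one strongly regular semisimple class
(class of `diag(a,a⁻¹)`, `a² ≠ 1`) and two regular unipotent classes: the number of
triples `(S₁,S₂,S₃) ∈ C₁ × C₂ × C₃` with `S₁S₂S₃ = 1` is `q³ - q`. -/
theorem GL2_triple_count_one_ss_two_unipotent
    {F : Type*} [Field F] [Fintype F] (hchar : ringChar F ≠ 2)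
    (q : ℕ) (hq : q = Fintype.card F)
    (a : Fˣ) (ha : (a : F) ^ 2 ≠ 1) :
    (Nat.card {x : Matrix (Fin 2) (Fin 2) F × Matrix (Fin 2) (Fin 2) F ×
        Matrix (Fin 2) (Fin 2) F //
        IsConj (Matrix.diagonal ![(a : F), ((a⁻¹ : Fˣ) : F)]) x.1 ∧
        IsConj (!![1, 1; 0, 1] : Matrix (Fin 2) (Fin 2) F) x.2.1 ∧
        IsConj (!![1, 1; 0, 1] : Matrix (Fin 2) (Fin 2) F) x.2.2 ∧
        x.1 * x.2.1 * x.2.2 = 1} : ℤ) = (q : ℤ) ^ 3 - q := by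
  have ha0 : (a : F) ≠ 0 := a.ne_zero
  set b : F := ((a⁻¹ : Fˣ) : F) with hb
  have hab1 : (a : F) * b = 1 := by simp [hb]
  have hab : (a : F) ≠ b := by
    intro h
    apply ha
    rw [← h] at hab1
    linear_combination hab1
  set t : F := a + b - 2 with ht'
  have ht : t ≠ 0 := by
    intro h
    have h1 : ((a : F) - 1) ^ 2 = 0 := by
      linear_combination (a : F) * h - hab1
    have h2 := pow_eq_zero_iff (two_ne_zero) |>.1 h1
    apply ha
    linear_combination ((a : F) + 1) * h2
  let U : F × F × F → Matrix (Fin 2) (Fin 2) F := fun p => !![1 + p.1, p.2.1; p.2.2, 1 - p.1]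
  have hUinj : Function.Injective U := by
    rintro ⟨x, y, z⟩ ⟨x', y', z'⟩ h
    have h00 := congrFun (congrFun h 0) 0
    have h01 := congrFun (congrFun h 0) 1
    have h10 := congrFun (congrFun h 1) 0
    simp [U] at h00 h01 h10
    simp [h00, h01, h10]
  have hUdet : ∀ p, p.1 ^ 2 + p.2.1 * p.2.2 = 0 → (U p).det = 1 := by
    intro p h
    simp [U, Matrix.det_fin_two]
    linear_combination -h
  have htr : ∀ p r, ((U p * U r).adjugate).trace
      = 2 + (2 * p.1 * r.1 + p.2.1 * r.2.2 + p.2.2 * r.2.1) := by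
    intro p r
    rw [Matrix.adjugate_fin_two, Matrix.trace_fin_two]
    simp [U, Matrix.mul_apply, Fin.sum_univ_two]
    ring
  let g : (F × Fˣ × F) ⊕ (Fˣ × F) → Matrix (Fin 2) (Fin 2) F × Matrix (Fin 2) (Fin 2) F ×
        Matrix (Fin 2) (Fin 2) F := fun p =>
    ((U (paramEntries t p).1 * U (paramEntries t p).2).adjugate,
      U (paramEntries t p).1, U (paramEntries t p).2)
  have hginj : Function.Injective g := by
    intro p r h
    simp only [g, Prod.mk.injEq] at h
    exact paramEntries_inj t ht (Prod.ext (hUinj h.2.1) (hUinj h.2.2))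
  have hset : Set.range g = {x | IsConj (Matrix.diagonal ![(a : F), b]) x.1 ∧
        IsConj (!![1, 1; 0, 1] : Matrix (Fin 2) (Fin 2) F) x.2.1 ∧
        IsConj (!![1, 1; 0, 1] : Matrix (Fin 2) (Fin 2) F) x.2.2 ∧
        x.1 * x.2.1 * x.2.2 = 1} := by
    ext ⟨S1, S2, S3⟩
    simp only [Set.mem_range, Set.mem_ofPred_eq, isConj_unip_iff, isConj_diag_iff _ _ hab]
    constructor
    · rintro ⟨p, hp⟩
      simp only [g, Prod.mk.injEq] at hp
      rcases hpe : paramEntries t p with ⟨⟨x, y, z⟩, u, v, w⟩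
      obtain ⟨h1, h2, h3⟩ := (paramEntries_range t ht x y z u v w).1 ⟨p, hpe⟩
      rw [hpe] at hp
      obtain ⟨rfl, rfl, rfl⟩ := hp
      have d1 := hUdet (x, y, z) h1
      have d2 := hUdet (u, v, w) h2
      refine ⟨⟨?_, ?_⟩, ⟨x, y, z, rfl, h1, ?_⟩, ⟨u, v, w, rfl, h2, ?_⟩, ?_⟩
      · rw [Matrix.det_adjugate, Matrix.det_mul, d1, d2, hab1]; simp
      · rw [htr]
        simp only
        rw [h3, ht']; ring
      · by_contra! hh
        obtain ⟨rfl, rfl⟩ := hh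
        have : x = 0 := by simpa using h1
        subst this
        apply ht
        rw [← h3]; ring
      · by_contra! hh
        obtain ⟨rfl, rfl⟩ := hh
        have : u = 0 := by simpa using h2
        subst this
        apply ht
        rw [← h3]; ring
      · rw [mul_assoc, Matrix.adjugate_mul, Matrix.det_mul, d1, d2]; simp
    · rintro ⟨⟨e1, e2⟩, ⟨x, y, z, rfl, h1, -⟩, ⟨u, v, w, rfl, h2, -⟩, h⟩
      have d1 := hUdet (x, y, z) h1
      have d2 := hUdet (u, v, w) h2
      have hS : S1 = (U (x, y, z) * U (u, v, w)).adjugate := by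
        have hm : (U (x, y, z) * U (u, v, w)) * (U (x, y, z) * U (u, v, w)).adjugate = 1 := by
          rw [Matrix.mul_adjugate, Matrix.det_mul, d1, d2]; simp
        have h' : S1 * (U (x, y, z) * U (u, v, w)) = 1 := by rw [← mul_assoc]; exact h
        exact left_inv_eq_right_inv h' hm
      have h3 : 2 * x * u + y * w + z * v = t := by
        rw [hS, htr] at e2
        simp only at e2
        rw [ht']
        linear_combination e2
      obtain ⟨p, hp⟩ := (paramEntries_range t ht x y z u v w).2 ⟨h1, h2, h3⟩
      refine ⟨p, ?_⟩
      simp only [g, hp, hS]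
      rfl
  have hcard : Nat.card (Set.range g) = Nat.card ((F × Fˣ × F) ⊕ (Fˣ × F)) :=
    Nat.card_range_of_injective hginj
  rw [hset] at hcard
  refine (congrArg (Nat.cast : ℕ → ℤ) hcard).trans ?_
  have hu : (Nat.card Fˣ : ℤ) = q - 1 := by
    rw [Nat.card_units, Nat.card_eq_fintype_card, ← hq, Nat.cast_sub]
    · simp
    · rw [hq]; exact Fintype.card_pos
  have hF : Nat.card F = q := by rw [Nat.card_eq_fintype_card, hq]
  rw [Nat.card_sum, Nat.card_prod, Nat.card_prod]
  push_cast
  rw [hu, hF]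
  ring
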